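/- (Converse part of Theorem 3, download cost.) In the MM-SPIR model (with all constraints), suppose in addition that for each n ∈ {1,…,N} the answer A_n^{[𝒫]} takes values in F_q^{d_n} for some natural number d_n (a string of d_n symbols from the field with q elements), and let D = d_1 + ⋯ + d_N be the total download cost. Then D ≥ ⌈N·P·L / (N−1)⌉. -/

import Mathlib

open Finset

namespace MMSPIR

variable {Ω : Type} [Fintype Ω]

/-- Probability that the random variable `X` takes the value `v`,
under the weight function `p` on the finite sample space `Ω`. -/
noncomputable def prob (p : Ω → ℝ) {V : Type} [DecidableEq V] (X : Ω → V) (v : V) : ℝ :=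
  ∑ ω ∈ Finset.univ.filter (fun ω => X ω = v), p ω

/-- Shannon entropy of `X`, with logarithm taken to base `q`. -/
noncomputable def ent (q : ℕ) (p : Ω → ℝ) {V : Type} [Fintype V] [DecidableEq V]
    (X : Ω → V) : ℝ :=
  -∑ v : V, prob p X v * Real.logb q (prob p X v)

/-- Conditional entropy `H(X | Y)`, base `q`. -/
noncomputable def cent (q : ℕ) (p : Ω → ℝ) {V W : Type} [Fintype V] [DecidableEq V]
    [Fintype W] [DecidableEq W] (X : Ω → V) (Y : Ω → W) : ℝ :=
  ent q p (fun ω => (X ω, Y ω)) - ent q p Y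

/-- Mutual information `I(X ; Y)`, base `q`. -/
noncomputable def mi (q : ℕ) (p : Ω → ℝ) {V W : Type} [Fintype V] [DecidableEq V]
    [Fintype W] [DecidableEq W] (X : Ω → V) (Y : Ω → W) : ℝ :=
  ent q p X + ent q p Y - ent q p (fun ω => (X ω, Y ω))

/-- Conditional mutual information `I(X ; Y | Z)`, base `q`. -/
noncomputable def cmi (q : ℕ) (p : Ω → ℝ) {U V W : Type} [Fintype U] [DecidableEq U]
    [Fintype V] [DecidableEq V] [Fintype W] [DecidableEq W]
    (X : Ω → U) (Y : Ω → V) (Z : Ω → W) : ℝ :=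
  cent q p X Z + cent q p Y Z - cent q p (fun ω => (X ω, Y ω)) Z

/-- `X` and `Y` have the same distribution. -/
def IdentDist (p : Ω → ℝ) {V : Type} [DecidableEq V] (X Y : Ω → V) : Prop :=
  ∀ v, prob p X v = prob p Y v

lemma prob_self_pos {p : Ω → ℝ} (hp0 : ∀ ω, 0 ≤ p ω) {V : Type} [DecidableEq V]
    (X : Ω → V) {ω : Ω} (h : 0 < p ω) : 0 < prob p X (X ω) := by
  unfold prob
  exact lt_of_lt_of_le h (Finset.single_le_sum (f := p) (fun i _ => hp0 i) (by simp))

lemma prob_nonneg {p : Ω → ℝ} (hp0 : ∀ ω, 0 ≤ p ω) {V : Type} [DecidableEq V]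
    (X : Ω → V) (v : V) : 0 ≤ prob p X v :=
  Finset.sum_nonneg (fun i _ => hp0 i)

lemma ent_eq (q : ℕ) (p : Ω → ℝ) {V : Type} [Fintype V] [DecidableEq V] (X : Ω → V) :
    ent q p X = -∑ ω, p ω * Real.logb q (prob p X (X ω)) := by
  unfold ent
  congr 1
  rw [← Finset.sum_fiberwise (s := Finset.univ) (g := X)]
  refine Finset.sum_congr rfl fun v _ => ?_
  conv_lhs => rw [prob, Finset.sum_mul]
  refine Finset.sum_congr rfl fun ω hω => ?_
  rw [(Finset.mem_filter.1 hω).2]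
  rfl

lemma ent_mono {q : ℕ} (hq : 1 < q) {p : Ω → ℝ} (hp0 : ∀ ω, 0 ≤ p ω)
    {V V' : Type} [Fintype V] [DecidableEq V] [Fintype V'] [DecidableEq V']
    (X : Ω → V) (Y : Ω → V') (h : ∀ ω ω', Y ω = Y ω' → X ω = X ω') :
    ent q p X ≤ ent q p Y := by
  rw [ent_eq, ent_eq]
  apply neg_le_neg
  refine Finset.sum_le_sum fun ω _ => ?_
  rcases (hp0 ω).eq_or_lt with h0 | h0
  · simp [← h0]
  · refine mul_le_mul_of_nonneg_left ?_ h0.le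
    refine Real.logb_le_logb_of_le (by exact_mod_cast hq) (prob_self_pos hp0 Y h0) ?_
    unfold prob
    refine Finset.sum_le_sum_of_subset_of_nonneg ?_ (fun i _ _ => hp0 i)
    intro i hi
    simp only [Finset.mem_filter, Finset.mem_univ, true_and] at hi ⊢
    exact h _ _ hi

/-- sum of `p / prob` over a fibre is at most one -/
lemma fibre_le_one {p : Ω → ℝ} (hp0 : ∀ ω, 0 ≤ p ω) {V : Type} [DecidableEq V]
    (X : Ω → V) (v : V) :
    ∑ ω ∈ Finset.univ.filter (fun ω => X ω = v), p ω / prob p X (X ω) ≤ 1 := by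
  have : ∑ ω ∈ Finset.univ.filter (fun ω => X ω = v), p ω / prob p X (X ω)
      = prob p X v / prob p X v := by
    conv_rhs => rw [prob, Finset.sum_div]
    refine Finset.sum_congr rfl fun ω hω => ?_
    rw [(Finset.mem_filter.1 hω).2]
    rfl
  rw [this]
  exact div_self_le_one _

lemma gibbs {q : ℕ} (hq : 1 < q) {p : Ω → ℝ} (hp0 : ∀ ω, 0 ≤ p ω) (hp1 : ∑ ω, p ω = 1)
    (r : Ω → ℝ) (hr : ∀ ω, 0 < p ω → 0 < r ω) (hs : ∑ ω, p ω * r ω ≤ 1) :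
    ∑ ω, p ω * Real.logb q (r ω) ≤ 0 := by
  have hl : 0 < Real.log q := Real.log_pos (by exact_mod_cast hq)
  have h1 : ∑ ω, p ω * Real.logb q (r ω) ≤ ∑ ω, (p ω * r ω - p ω) / Real.log q := by
    refine Finset.sum_le_sum fun ω _ => ?_
    rcases (hp0 ω).eq_or_lt with h0 | h0
    · simp [← h0]
    · rw [Real.logb, ← mul_div_assoc]
      refine div_le_div_of_nonneg_right ?_ hl.le
      have := Real.log_le_sub_one_of_pos (hr ω h0)
      nlinarith
  refine h1.trans ?_
  rw [← Finset.sum_div, Finset.sum_sub_distrib, hp1]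
  exact div_nonpos_of_nonpos_of_nonneg (by linarith) hl.le

lemma ent_le_card {q : ℕ} (hq : 1 < q) {p : Ω → ℝ} (hp0 : ∀ ω, 0 ≤ p ω)
    (hp1 : ∑ ω, p ω = 1) {V : Type} [Fintype V] [DecidableEq V] (X : Ω → V) :
    ent q p X ≤ Real.logb q (Fintype.card V) := by
  have hne : Nonempty Ω := by
    by_contra h
    rw [not_nonempty_iff] at h
    simp at hp1
  obtain ⟨ω₀⟩ := hne
  have hc : (0 : ℝ) < Fintype.card V := by
    exact_mod_cast Fintype.card_pos_iff.2 ⟨X ω₀⟩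
  have h := gibbs hq hp0 hp1 (fun ω => 1 / (prob p X (X ω) * Fintype.card V))
    (fun ω h0 => by have := prob_self_pos hp0 X h0; positivity) ?_
  · have h2 : ∑ ω, p ω * Real.logb q (1 / (prob p X (X ω) * Fintype.card V))
        = ent q p X - Real.logb q (Fintype.card V) := by
      rw [ent_eq]
      have : Real.logb q (Fintype.card V) = ∑ ω, p ω * Real.logb q (Fintype.card V) := by
        rw [← Finset.sum_mul, hp1, one_mul]
      rw [this, ← Finset.sum_neg_distrib, ← Finset.sum_sub_distrib]
      refine Finset.sum_congr rfl fun ω _ => ?_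
      rcases (hp0 ω).eq_or_lt with h0 | h0
      · simp [← h0]
      · have := prob_self_pos hp0 X h0
        rw [one_div, Real.logb_inv, Real.logb_mul this.ne' hc.ne']
        ring
    linarith
  · have h3 : ∑ ω, p ω / prob p X (X ω) ≤ Fintype.card V := by
      rw [← Finset.sum_fiberwise (s := Finset.univ) (g := X)]
      calc _ ≤ ∑ v : V, (1 : ℝ) := Finset.sum_le_sum fun v _ => fibre_le_one hp0 X v
        _ = _ := by simp
    calc _ = (∑ ω, p ω / prob p X (X ω)) / Fintype.card V := by
          rw [Finset.sum_div]
          refine Finset.sum_congr rfl fun ω _ => ?_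
          rw [mul_one_div, div_div]
      _ ≤ 1 := by rw [div_le_one hc]; exact h3

lemma submod_pair {q : ℕ} (hq : 1 < q) {p : Ω → ℝ} (hp0 : ∀ ω, 0 ≤ p ω)
    (hp1 : ∑ ω, p ω = 1)
    {V₁ V₂ V₃ : Type} [Fintype V₁] [DecidableEq V₁] [Fintype V₂] [DecidableEq V₂]
    [Fintype V₃] [DecidableEq V₃]
    (A : Ω → V₁) (B : Ω → V₂) (Z : Ω → V₃)
    (hA : ∀ ω ω', A ω = A ω' → Z ω = Z ω') (hB : ∀ ω ω', B ω = B ω' → Z ω = Z ω') :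
    ent q p (fun ω => (A ω, B ω)) + ent q p Z ≤ ent q p A + ent q p B := by
  set AB : Ω → V₁ × V₂ := fun ω => (A ω, B ω) with hAB
  have h := gibbs hq hp0 hp1
    (fun ω => prob p A (A ω) * prob p B (B ω) / (prob p AB (AB ω) * prob p Z (Z ω)))
    (fun ω h0 => by
      have := prob_self_pos hp0 A h0
      have := prob_self_pos hp0 B h0
      have := prob_self_pos hp0 AB h0
      have := prob_self_pos hp0 Z h0
      positivity) ?_
  · have h2 : ∑ ω, p ω * Real.logb q
          (prob p A (A ω) * prob p B (B ω) / (prob p AB (AB ω) * prob p Z (Z ω)))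
        = ent q p AB + ent q p Z - ent q p A - ent q p B := by
      simp only [ent_eq]
      rw [← Finset.sum_neg_distrib, ← Finset.sum_neg_distrib, ← Finset.sum_neg_distrib,
        ← Finset.sum_neg_distrib, ← Finset.sum_add_distrib, ← Finset.sum_sub_distrib,
        ← Finset.sum_sub_distrib]
      refine Finset.sum_congr rfl fun ω _ => ?_
      rcases (hp0 ω).eq_or_lt with h0 | h0
      · simp [← h0]
      · have h1 := prob_self_pos hp0 A h0
        have h2 := prob_self_pos hp0 B h0
        have h3 := prob_self_pos hp0 AB h0
        have h4 := prob_self_pos hp0 Z h0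
        rw [Real.logb_div (by positivity) (by positivity), Real.logb_mul h1.ne' h2.ne',
          Real.logb_mul h3.ne' h4.ne']
        ring
    linarith
  · have e1 : ∀ ω, p ω * (prob p A (A ω) * prob p B (B ω) /
        (prob p AB (AB ω) * prob p Z (Z ω))) =
        ∑ x, ∑ y, if A ω = A x ∧ B ω = B y then
          p x * p y / prob p Z (Z x) * (p ω / prob p AB (AB ω)) else 0 := by
      intro ω
      have : prob p A (A ω) * prob p B (B ω) =
          ∑ x, ∑ y, if A ω = A x ∧ B ω = B y then p x * p y else 0 := by
        unfold prob
        rw [Finset.sum_mul_sum, Finset.sum_filter]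
        refine Finset.sum_congr rfl fun x _ => ?_
        by_cases hx : A x = A ω
        · simp [hx, Finset.sum_filter, eq_comm]
        · simp [hx, Ne.symm hx]
      rw [this, Finset.sum_div, Finset.mul_sum]
      refine Finset.sum_congr rfl fun x _ => ?_
      rw [Finset.sum_div, Finset.mul_sum]
      refine Finset.sum_congr rfl fun y _ => ?_
      split_ifs with hc
      · rw [hA _ _ hc.1]
        simp only [div_eq_mul_inv, mul_inv]
        ring
      · simp
    simp only [e1]
    rw [Finset.sum_comm]
    have e2 : ∀ x, ∑ ω, ∑ y, (if A ω = A x ∧ B ω = B y then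
          p x * p y / prob p Z (Z x) * (p ω / prob p AB (AB ω)) else 0) ≤ p x := by
      intro x
      rw [Finset.sum_comm]
      have e3 : ∀ y, ∑ ω, (if A ω = A x ∧ B ω = B y then
          p x * p y / prob p Z (Z x) * (p ω / prob p AB (AB ω)) else 0) ≤
          if Z y = Z x then p x * p y / prob p Z (Z x) else 0 := by
        intro y
        split_ifs with hz
        · rw [← Finset.sum_filter, ← Finset.mul_sum]
          refine mul_le_of_le_one_right ?_ ?_
          · have := hp0 x
            have := hp0 y
            have := prob_nonneg hp0 Z (Z x)
            positivity
          · have := fibre_le_one hp0 AB (A x, B y)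
            simpa [hAB, Prod.mk.injEq] using this
        · refine (Finset.sum_eq_zero fun ω _ => ?_).le
          rw [if_neg]
          rintro ⟨h1, h2⟩
          exact hz ((hB _ _ h2).symm.trans (hA _ _ h1))
      refine (Finset.sum_le_sum fun y _ => e3 y).trans ?_
      rw [← Finset.sum_filter, ← Finset.sum_div, ← Finset.mul_sum]
      have : ∑ i ∈ Finset.univ.filter (fun y => Z y = Z x), p i = prob p Z (Z x) := rfl
      rw [this, mul_div_assoc]
      exact mul_le_of_le_one_right (hp0 x) (div_self_le_one _)
    calc _ ≤ ∑ x, p x := Finset.sum_le_sum fun x _ => e2 x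
      _ ≤ 1 := hp1.le

lemma submod {q : ℕ} (hq : 1 < q) {p : Ω → ℝ} (hp0 : ∀ ω, 0 ≤ p ω)
    (hp1 : ∑ ω, p ω = 1)
    {V₁ V₂ V₃ V₄ : Type} [Fintype V₁] [DecidableEq V₁] [Fintype V₂] [DecidableEq V₂]
    [Fintype V₃] [DecidableEq V₃] [Fintype V₄] [DecidableEq V₄]
    (U : Ω → V₄) (Z : Ω → V₃) (A : Ω → V₁) (B : Ω → V₂)
    (hU : ∀ ω ω', A ω = A ω' → B ω = B ω' → U ω = U ω')
    (hA : ∀ ω ω', A ω = A ω' → Z ω = Z ω') (hB : ∀ ω ω', B ω = B ω' → Z ω = Z ω') :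
    ent q p U + ent q p Z ≤ ent q p A + ent q p B := by
  have h1 := submod_pair hq hp0 hp1 A B Z hA hB
  have h2 := ent_mono hq hp0 U (fun ω => (A ω, B ω)) (fun ω ω' h => by
    rw [Prod.mk.injEq] at h; exact hU _ _ h.1 h.2)
  linarith

lemma ent_nonneg_of {q : ℕ} {p : Ω → ℝ} (hp1 : ∑ ω, p ω = 1) :
    ent q p (fun _ : Ω => ()) = 0 := by
  rw [ent_eq]
  simp [prob, hp1]

lemma subadd {q : ℕ} (hq : 1 < q) {p : Ω → ℝ} (hp0 : ∀ ω, 0 ≤ p ω)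
    (hp1 : ∑ ω, p ω = 1)
    {V₁ V₂ V₄ : Type} [Fintype V₁] [DecidableEq V₁] [Fintype V₂] [DecidableEq V₂]
    [Fintype V₄] [DecidableEq V₄]
    (U : Ω → V₄) (A : Ω → V₁) (B : Ω → V₂)
    (hU : ∀ ω ω', A ω = A ω' → B ω = B ω' → U ω = U ω') :
    ent q p U ≤ ent q p A + ent q p B := by
  have h1 := submod hq hp0 hp1 U (fun _ => ()) A B hU (fun _ _ _ => rfl) (fun _ _ _ => rfl)
  rw [ent_nonneg_of hp1] at h1
  linarith

lemma prob_comp (p : Ω → ℝ) {V V' : Type} [Fintype V] [DecidableEq V] [DecidableEq V']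
    (X : Ω → V) (f : V → V') (v' : V') :
    prob p (fun ω => f (X ω)) v' = ∑ v ∈ Finset.univ.filter (fun v => f v = v'), prob p X v := by
  unfold prob
  rw [Finset.sum_filter, ← Finset.sum_fiberwise (s := Finset.univ) (g := X), Finset.sum_filter]
  refine Finset.sum_congr rfl fun v _ => ?_
  split_ifs with h
  · refine Finset.sum_congr rfl fun ω hω => ?_
    have hX := (Finset.mem_filter.1 hω).2
    simp only [hX, if_pos h]
  · refine Finset.sum_eq_zero fun ω hω => ?_
    have hX := (Finset.mem_filter.1 hω).2
    simp only [hX, if_neg h]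

lemma ent_congr_dist (q : ℕ) (p : Ω → ℝ) {V V' : Type} [Fintype V] [DecidableEq V]
    [Fintype V'] [DecidableEq V'] (X Y : Ω → V) (h : IdentDist p X Y) (f : V → V') :
    ent q p (fun ω => f (X ω)) = ent q p (fun ω => f (Y ω)) := by
  unfold ent
  congr 1
  refine Finset.sum_congr rfl fun v' _ => ?_
  have : prob p (fun ω => f (X ω)) v' = prob p (fun ω => f (Y ω)) v' := by
    rw [prob_comp, prob_comp]
    exact Finset.sum_congr rfl fun v _ => h v
  rw [this]

/-- Adding messages increases entropy by at most `L` each. -/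
lemma grow {q : ℕ} (hq : 1 < q) {p : Ω → ℝ} (hp0 : ∀ ω, 0 ≤ p ω) (hp1 : ∑ ω, p ω = 1)
    {K : ℕ} {MT V : Type} [Fintype MT] [DecidableEq MT] [Fintype V] [DecidableEq V]
    (W : Fin K → Ω → MT) (l : ℝ) (hWk : ∀ k, ent q p (W k) = l) (C : Ω → V)
    (T U : Finset (Fin K)) :
    ent q p (fun ω => (C ω, fun k : {x // x ∈ T ∪ U} => W k.1 ω)) ≤
      ent q p (fun ω => (C ω, fun k : {x // x ∈ T} => W k.1 ω)) + U.card * l := by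
  induction U using Finset.induction_on with
  | empty =>
    have := ent_mono hq hp0 (fun ω => (C ω, fun k : {x // x ∈ T ∪ ∅} => W k.1 ω))
      (fun ω => (C ω, fun k : {x // x ∈ T} => W k.1 ω)) (by
        intro ω ω' h
        simp only [Prod.mk.injEq, funext_iff, Subtype.forall] at h ⊢
        grind)
    simpa using this
  | insert i U hi ih =>
    have := subadd hq hp0 hp1 (fun ω => (C ω, fun k : {x // x ∈ T ∪ insert i U} => W k.1 ω))
      (fun ω => (C ω, fun k : {x // x ∈ T ∪ U} => W k.1 ω)) (W i) (by
        intro ω ω' h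
        simp only [Prod.mk.injEq, funext_iff, Subtype.forall] at h ⊢
        grind)
    rw [Finset.card_insert_of_notMem hi]
    push_cast
    linarith [hWk i]

lemma ent_W {q : ℕ} (hq : 1 < q) {p : Ω → ℝ} (hp0 : ∀ ω, 0 ≤ p ω) (hp1 : ∑ ω, p ω = 1)
    {K : ℕ} {MT : Type} [Fintype MT] [DecidableEq MT]
    (W : Fin K → Ω → MT) (l : ℝ) (hWk : ∀ k, ent q p (W k) = l)
    (hWall : ent q p (fun ω (k : Fin K) => W k ω) = (K : ℝ) * l) (T : Finset (Fin K)) :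
    (T.card : ℝ) * l ≤ ent q p (fun ω (k : {x // x ∈ T}) => W k.1 ω) := by
  have h1 := grow hq hp0 hp1 W l hWk (fun _ => ()) T Tᶜ
  have h2 := ent_mono hq hp0 (fun ω (k : Fin K) => W k ω)
    (fun ω => ((), fun k : {x // x ∈ T ∪ Tᶜ} => W k.1 ω)) (by
        intro ω ω' h
        simp only [Prod.mk.injEq, funext_iff, Subtype.forall] at h ⊢
        intro k
        exact h.2 k (by simp))
  have h3 := ent_mono hq hp0 (fun ω => ((), fun k : {x // x ∈ T} => W k.1 ω))
    (fun ω (k : {x // x ∈ T}) => W k.1 ω) (by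
        intro ω ω' h
        simp only [h])
  have h4 : (T.card : ℝ) + (Tᶜ.card : ℝ) = K := by
    have := Finset.card_add_card_compl T
    rw [Fintype.card_fin] at this
    exact_mod_cast this
  have : (K : ℝ) * l = T.card * l + Tᶜ.card * l := by rw [← h4]; ring
  linarith

theorem download_cost_converse
    {Ω MT QT FT ST : Type}
    [Fintype Ω] [Fintype MT] [DecidableEq MT] [Fintype QT] [DecidableEq QT]
    [Fintype FT] [DecidableEq FT] [Fintype ST] [DecidableEq ST]
    (N K P L q : ℕ) (hN : 2 ≤ N) (hK : 2 ≤ K) (hP1 : 1 ≤ P) (hP2 : P ≤ K - 1)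
    (hL : 1 ≤ L) (hq : IsPrimePow q)
    (p : Ω → ℝ) (hp0 : ∀ ω, 0 ≤ p ω) (hp1 : (∑ ω, p ω) = 1)
    (W : Fin K → Ω → MT) (F : Ω → FT) (S : Ω → ST)
    (Q : Finset (Fin K) → Fin N → Ω → QT)
    (d : Fin N → ℕ)
    (A : Finset (Fin K) → (n : Fin N) → Ω → (Fin (d n) → Fin q))
    (hWk : ∀ k, ent q p (W k) = (L : ℝ))
    (hWall : ent q p (fun ω (k : Fin K) => W k ω) = (K : ℝ) * L)
    (hind : ent q p (fun ω => (F ω, S ω, fun k : Fin K => W k ω)) =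
      ent q p F + ent q p S + ent q p (fun ω (k : Fin K) => W k ω))
    (hQdet : ∀ 𝒫₀ : Finset (Fin K), 𝒫₀.card = P →
      cent q p (fun ω (n : Fin N) => Q 𝒫₀ n ω) F = 0)
    (hAdet : ∀ 𝒫₀ : Finset (Fin K), 𝒫₀.card = P → ∀ n : Fin N,
      cent q p (A 𝒫₀ n) (fun ω => (Q 𝒫₀ n ω, (fun k : Fin K => W k ω), S ω)) = 0)
    (hrel : ∀ 𝒫₀ : Finset (Fin K), 𝒫₀.card = P →
      cent q p (fun ω (k : {x : Fin K // x ∈ 𝒫₀}) => W k.1 ω)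
        (fun ω => ((fun n : Fin N => A 𝒫₀ n ω), F ω)) = 0)
    (hupriv : ∀ (n : Fin N) (𝒫₁ 𝒫₂ : Finset (Fin K)), 𝒫₁.card = P → 𝒫₂.card = P →
      IdentDist p
        (fun ω => (Q 𝒫₁ n ω, A 𝒫₁ n ω, (fun k : Fin K => W k ω), S ω))
        (fun ω => (Q 𝒫₂ n ω, A 𝒫₂ n ω, (fun k : Fin K => W k ω), S ω)))
    (hdpriv : ∀ 𝒫₀ : Finset (Fin K), 𝒫₀.card = P →
      mi q p (fun ω (k : {x : Fin K // x ∈ 𝒫₀ᶜ}) => W k.1 ω)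
        (fun ω => ((fun n : Fin N => Q 𝒫₀ n ω), (fun n : Fin N => A 𝒫₀ n ω), F ω)) = 0)
    : Nat.ceil ((N : ℝ) * P * L / ((N : ℝ) - 1)) ≤ ∑ n : Fin N, d n := by
  have hq1 : 1 < q := hq.one_lt
  obtain ⟨l, hl⟩ : ∃ l : ℝ, l = L := ⟨_, rfl⟩
  rw [← hl] at hWall
  simp only [← hl] at hWk
  have hPK : P + 1 ≤ K := by omega
  -- the entropy function of an answer together with some messages
  have key : ∀ (𝒫₁ : Finset (Fin K)), 𝒫₁.card = P → ∀ n : Fin N,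
      ent q p (fun ω => (Q 𝒫₁ n ω, A 𝒫₁ n ω)) + P * l ≤
      ent q p (fun ω => ((Q 𝒫₁ n ω, A 𝒫₁ n ω), fun k : {x // x ∈ 𝒫₁} => W k.1 ω)) := by
    intro 𝒫₁ h𝒫₁ n
    obtain ⟨g, hg⟩ : ∃ g : Finset (Fin K) → ℝ, ∀ T, g T =
      ent q p (fun ω => ((Q 𝒫₁ n ω, A 𝒫₁ n ω), fun k : {x // x ∈ T} => W k.1 ω)) :=
        ⟨_, fun _ => rfl⟩
    have hg' : ∀ 𝒫₀ : Finset (Fin K), 𝒫₀.card = P → ∀ T, g T =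
      ent q p (fun ω => ((Q 𝒫₀ n ω, A 𝒫₀ n ω), fun k : {x // x ∈ T} => W k.1 ω)) := by
      intro 𝒫₀ h𝒫₀ T
      rw [hg]
      exact ent_congr_dist q p _ _ (hupriv n 𝒫₁ 𝒫₀ h𝒫₁ h𝒫₀)
        (fun v => ((v.1, v.2.1), fun k : {x // x ∈ T} => v.2.2.1 k.1))
    have s1 : ∀ 𝒫₀ : Finset (Fin K), 𝒫₀.card = P →
        g 𝒫₀ + ((K : ℝ) - P) * l ≤ g Finset.univ := by
      intro 𝒫₀ h𝒫₀
      rw [hg' 𝒫₀ h𝒫₀, hg' 𝒫₀ h𝒫₀]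
      have hd := hdpriv 𝒫₀ h𝒫₀
      have hr := hrel 𝒫₀ h𝒫₀
      unfold mi at hd
      unfold cent at hr
      have hw := ent_W hq1 hp0 hp1 W l hWk hWall 𝒫₀ᶜ
      have hcard : ((𝒫₀ᶜ).card : ℝ) = (K : ℝ) - P := by
        have := Finset.card_add_card_compl 𝒫₀
        rw [Fintype.card_fin, h𝒫₀] at this
        have h2 : (P : ℝ) + ((𝒫₀ᶜ).card : ℝ) = K := by exact_mod_cast this
        linarith
      rw [hcard] at hw
      -- adding the decoded messages to everything
      set_option synthInstance.maxSize 4000 in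
      set_option synthInstance.maxHeartbeats 400000 in
      have a1 := submod hq1 hp0 hp1
        (fun ω => ((fun k : {x // x ∈ 𝒫₀} => W k.1 ω),
          (fun n : Fin N => Q 𝒫₀ n ω), (fun n : Fin N => A 𝒫₀ n ω), F ω))
        (fun ω => ((fun n : Fin N => A 𝒫₀ n ω), F ω))
        (fun ω => ((fun k : {x // x ∈ 𝒫₀} => W k.1 ω), ((fun n : Fin N => A 𝒫₀ n ω), F ω)))
        (fun ω => ((fun n : Fin N => Q 𝒫₀ n ω), (fun n : Fin N => A 𝒫₀ n ω), F ω))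
        (by intro ω ω' h h'; simp only [Prod.mk.injEq] at h h' ⊢; tauto)
        (by intro ω ω' h; simp only [Prod.mk.injEq] at h ⊢; tauto)
        (by intro ω ω' h; simp only [Prod.mk.injEq] at h ⊢; tauto)
      set_option synthInstance.maxSize 4000 in
      set_option synthInstance.maxHeartbeats 400000 in
      have a2 := submod hq1 hp0 hp1
        (fun ω => ((fun (k : {x : Fin K // x ∈ 𝒫₀ᶜ}) => W k.1 ω),
          (fun n : Fin N => Q 𝒫₀ n ω), (fun n : Fin N => A 𝒫₀ n ω), F ω))
        (fun ω => ((Q 𝒫₀ n ω, A 𝒫₀ n ω), fun k : {x // x ∈ 𝒫₀} => W k.1 ω))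
        (fun ω => ((Q 𝒫₀ n ω, A 𝒫₀ n ω),
          fun k : {x // x ∈ (Finset.univ : Finset (Fin K))} => W k.1 ω))
        (fun ω => ((fun k : {x // x ∈ 𝒫₀} => W k.1 ω),
          (fun n : Fin N => Q 𝒫₀ n ω), (fun n : Fin N => A 𝒫₀ n ω), F ω))
        (by
          intro ω ω' h h'
          simp only [Prod.mk.injEq] at h h' ⊢
          refine ⟨?_, h'.2⟩
          funext k
          exact congrFun h.2 ⟨k.1, Finset.mem_univ _⟩)
        (by
          intro ω ω' h
          simp only [Prod.mk.injEq] at h ⊢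
          refine ⟨h.1, ?_⟩
          funext k
          exact congrFun h.2 ⟨k.1, Finset.mem_univ _⟩)
        (by
          intro ω ω' h
          simp only [Prod.mk.injEq] at h ⊢
          exact ⟨⟨congrFun h.2.1 n, congrFun h.2.2.1 n⟩, h.1⟩)
      linarith
    have s2 : ∀ i : Fin K, g (Finset.univ.erase i) + l ≤ g Finset.univ := by
      intro i
      obtain ⟨𝒫₀, hsub, h𝒫₀⟩ := Finset.exists_subset_card_eq
        (s := (Finset.univ : Finset (Fin K)).erase i) (n := P) (by
          rw [Finset.card_erase_of_mem (Finset.mem_univ _)]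
          simp
          omega)
      have b1 := grow hq1 hp0 hp1 W l hWk (fun ω => (Q 𝒫₁ n ω, A 𝒫₁ n ω)) 𝒫₀
        (Finset.univ.erase i \ 𝒫₀)
      rw [Finset.union_sdiff_of_subset hsub, ← hg, ← hg] at b1
      have hc : ((Finset.univ.erase i \ 𝒫₀).card : ℝ) = (K : ℝ) - P - 1 := by
        rw [Finset.cast_card_sdiff hsub, Finset.card_erase_of_mem (Finset.mem_univ _), h𝒫₀]
        have : ((K - 1 : ℕ) : ℝ) = (K : ℝ) - 1 := by
          rw [Nat.cast_sub (by omega)]; simp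
        simp only [Finset.card_univ, Fintype.card_fin, this]
        ring
      rw [hc] at b1
      have := s1 𝒫₀ h𝒫₀
      nlinarith
    have s3 : ∀ T : Finset (Fin K), g ∅ + T.card * l ≤ g T := by
      intro T
      induction T using Finset.induction_on with
      | empty => simp
      | insert i T hi ih =>
        have s2i := s2 i
        obtain ⟨T', hT'⟩ : ∃ T', T' = Finset.univ.erase i := ⟨_, rfl⟩
        rw [← hT'] at s2i
        have c1 := submod hq1 hp0 hp1
          (fun ω => ((Q 𝒫₁ n ω, A 𝒫₁ n ω),
            fun k : {x // x ∈ (Finset.univ : Finset (Fin K))} => W k.1 ω))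
          (fun ω => ((Q 𝒫₁ n ω, A 𝒫₁ n ω), fun k : {x // x ∈ T} => W k.1 ω))
          (fun ω => ((Q 𝒫₁ n ω, A 𝒫₁ n ω), fun k : {x // x ∈ insert i T} => W k.1 ω))
          (fun ω => ((Q 𝒫₁ n ω, A 𝒫₁ n ω),
            fun k : {x // x ∈ T'} => W k.1 ω))
          (by
            intro ω ω' h h'
            rw [Prod.mk.injEq] at h h' ⊢
            refine ⟨h.1, ?_⟩
            funext k
            by_cases hk : k.1 = i
            · exact congrFun h.2 ⟨k.1, by simp [hk, hT']⟩
            · exact congrFun h'.2 ⟨k.1, by simp [hk, hT']⟩)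
          (by
            intro ω ω' h
            rw [Prod.mk.injEq] at h ⊢
            refine ⟨h.1, ?_⟩
            funext k
            exact congrFun h.2 ⟨k.1, by simp [k.2]⟩)
          (by
            intro ω ω' h
            rw [Prod.mk.injEq] at h ⊢
            refine ⟨h.1, ?_⟩
            funext k
            have hk : k.1 ≠ i := fun e => hi (e ▸ k.2)
            exact congrFun h.2 ⟨k.1, by simp [hk, hT']⟩)
        rw [← hg, ← hg, ← hg, ← hg] at c1
        rw [Finset.card_insert_of_notMem hi]
        push_cast
        linarith
    have s4 := s3 𝒫₁
    have s5 := ent_mono hq1 hp0 (fun ω => (Q 𝒫₁ n ω, A 𝒫₁ n ω))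
      (fun ω => ((Q 𝒫₁ n ω, A 𝒫₁ n ω),
        fun k : {x // x ∈ (∅ : Finset (Fin K))} => W k.1 ω))
      (by intro ω ω' h; exact (Prod.mk.injEq _ _ _ _ ▸ h).1)
    rw [← hg] at s5
    rw [← hg]
    rw [h𝒫₁] at s4
    linarith
  -- fix a desired set
  obtain ⟨R, -, hR⟩ := Finset.exists_subset_card_eq
    (s := (Finset.univ : Finset (Fin K))) (n := P) (by simp; omega)
  obtain ⟨hh, hhd⟩ : ∃ hh : Fin N → ℝ, ∀ n, hh n =
    ent q p (fun ω => (Q R n ω, A R n ω)) - ent q p (Q R n) := ⟨_, fun _ => rfl⟩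
  obtain ⟨x, hx⟩ : ∃ x : ℝ, x =
    ent q p (fun ω => ((fun n : Fin N => A R n ω), F ω)) - ent q p F := ⟨_, rfl⟩
  have hQF : ∀ n, ent q p (fun ω => (F ω, Q R n ω)) ≤ ent q p F := by
    intro n
    have h := hQdet R hR
    unfold cent at h
    have := ent_mono hq1 hp0 (fun ω => (F ω, Q R n ω))
      (fun ω => ((fun n : Fin N => Q R n ω), F ω)) (by
        intro ω ω' h
        rw [Prod.mk.injEq] at h ⊢
        exact ⟨h.2, congrFun h.1 n⟩)
    linarith
  have lower : ∀ n, P * l + hh n ≤ x := by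
    intro n
    have hk := key R hR n
    have hr := hrel R hR
    have ha := hAdet R hR n
    unfold cent at hr ha
    have c1 := submod hq1 hp0 hp1
      (fun ω => (F ω, S ω, fun k : Fin K => W k ω))
      (fun ω => ((Q R n ω, A R n ω), fun k : {x // x ∈ R} => W k.1 ω))
      (fun ω => (F ω, (Q R n ω, A R n ω), fun k : {x // x ∈ R} => W k.1 ω))
      (fun ω => (A R n ω, (Q R n ω, (fun k : Fin K => W k ω), S ω)))
      (by intro ω ω' h h'; simp only [Prod.mk.injEq] at h h' ⊢; tauto)
      (by intro ω ω' h; simp only [Prod.mk.injEq] at h ⊢; tauto)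
      (by
        intro ω ω' h
        simp only [Prod.mk.injEq] at h ⊢
        refine ⟨⟨h.2.1, h.1⟩, ?_⟩
        funext k
        exact congrFun h.2.2.1 k.1)
    have c2 := subadd hq1 hp0 hp1
      (fun ω => (Q R n ω, (fun k : Fin K => W k ω), S ω)) (Q R n)
      (fun ω => ((fun k : Fin K => W k ω), S ω))
      (by intro ω ω' h h'; simp only [Prod.mk.injEq] at h h' ⊢; tauto)
    have c3 := subadd hq1 hp0 hp1
      (fun ω => ((fun k : Fin K => W k ω), S ω)) (fun ω (k : Fin K) => W k ω) S
      (by intro ω ω' h h'; simp only [Prod.mk.injEq] at h h' ⊢; tauto)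
    -- remove the query, which is a function of F
    have c4 := submod hq1 hp0 hp1
      (fun ω => (F ω, (Q R n ω, A R n ω), fun k : {x // x ∈ R} => W k.1 ω)) F
      (fun ω => (F ω, Q R n ω))
      (fun ω => ((fun k : {x // x ∈ R} => W k.1 ω), ((fun n : Fin N => A R n ω), F ω)))
      (by
        intro ω ω' h h'
        simp only [Prod.mk.injEq] at h h' ⊢
        exact ⟨h.1, ⟨h.2, congrFun h'.2.1 n⟩, h'.1⟩)
      (by intro ω ω' h; simp only [Prod.mk.injEq] at h; tauto)
      (by intro ω ω' h; simp only [Prod.mk.injEq] at h; tauto)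
    have c5 := hQF n
    rw [hhd, hx]
    linarith
  have upper : x ≤ ∑ n, hh n := by
    have step : ∀ T : Finset (Fin N),
        ent q p (fun ω => ((fun n : {y // y ∈ T} => A R n.1 ω), F ω)) ≤
          ent q p F + ∑ n ∈ T, hh n := by
      intro T
      induction T using Finset.induction_on with
      | empty =>
        have := ent_mono hq1 hp0
          (fun ω => ((fun n : {y // y ∈ (∅ : Finset (Fin N))} => A R n.1 ω), F ω)) F
          (by
            intro ω ω' h
            rw [Prod.mk.injEq]
            refine ⟨?_, h⟩
            funext k
            exact absurd k.2 (Finset.notMem_empty _))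
        simpa using this
      | insert i T hi ih =>
        have d1 := submod hq1 hp0 hp1
          (fun ω => ((fun n : {y // y ∈ insert i T} => A R n.1 ω), F ω)) F
          (fun ω => ((fun n : {y // y ∈ T} => A R n.1 ω), F ω))
          (fun ω => (A R i ω, F ω))
          (by
            intro ω ω' h h'
            rw [Prod.mk.injEq] at h h' ⊢
            refine ⟨?_, h.2⟩
            funext k
            obtain ⟨k, hk⟩ := k
            rcases Finset.mem_insert.1 hk with rfl | hk'
            · exact h'.1
            · exact congrFun h.1 ⟨k, hk'⟩)
          (by intro ω ω' h; rw [Prod.mk.injEq] at h; exact h.2)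
          (by intro ω ω' h; rw [Prod.mk.injEq] at h; exact h.2)
        have d2 := submod hq1 hp0 hp1
          (fun ω => (A R i ω, F ω)) (Q R i)
          (fun ω => (Q R i ω, A R i ω))
          (fun ω => (F ω, Q R i ω))
          (by intro ω ω' h h'; simp only [Prod.mk.injEq] at h h' ⊢; tauto)
          (by intro ω ω' h; rw [Prod.mk.injEq] at h; exact h.1)
          (by intro ω ω' h; rw [Prod.mk.injEq] at h; exact h.2)
        have d3 := hQF i
        rw [Finset.sum_insert hi, hhd i]
        linarith
    have e1 := step Finset.univ
    have e2 := ent_mono hq1 hp0 (fun ω => ((fun n : Fin N => A R n ω), F ω))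
      (fun ω => ((fun n : {y // y ∈ (Finset.univ : Finset (Fin N))} => A R n.1 ω), F ω))
      (by
        intro ω ω' h
        rw [Prod.mk.injEq] at h ⊢
        refine ⟨?_, h.2⟩
        funext k
        exact congrFun h.1 ⟨k, Finset.mem_univ _⟩)
    rw [hx]
    linarith
  have hD : x ≤ ((∑ n : Fin N, d n : ℕ) : ℝ) := by
    have e1 := subadd hq1 hp0 hp1 (fun ω => ((fun n : Fin N => A R n ω), F ω))
      (fun ω (n : Fin N) => A R n ω) F
      (by intro ω ω' h h'; rw [Prod.mk.injEq]; exact ⟨h, h'⟩)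
    have e2 := ent_le_card hq1 hp0 hp1 (fun ω (n : Fin N) => A R n ω)
    have e3 : Fintype.card ((n : Fin N) → (Fin (d n) → Fin q)) = q ^ (∑ n : Fin N, d n) := by
      simp [Fintype.card_pi, Finset.prod_pow_eq_pow_sum]
    rw [e3, Nat.cast_pow, Real.logb_pow, Real.logb_self_eq_one (by exact_mod_cast hq1),
      mul_one] at e2
    rw [hx]
    linarith
  have hsum : (N : ℝ) * (P * l) + ∑ n, hh n ≤ N * x := by
    have := Finset.sum_le_sum (fun n (_ : n ∈ (Finset.univ : Finset (Fin N))) => lower n)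
    simpa [Finset.sum_add_distrib] using this
  have hN' : (2 : ℝ) ≤ N := by exact_mod_cast hN
  rw [Nat.ceil_le, div_le_iff₀ (by linarith), ← hl]
  nlinarith

end MMSPIR
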